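/- Let (X,d,μ) and (Y,ρ,ν) be complete separable metric spaces with Borel probability measures having finite fourth moments, and let γ be a coupling of μ and ν, i.e. a Borel probability measure on X × Y with marginals μ and ν. Set C_X := (∫_{X×X} d(x,y)⁴ dμ(x) dμ(y))^{1/4} and D := (∫_{(X×Y)²} |d(x,y) - ρ(x',y')|⁴ dγ(x,x') dγ(y,y'))^{1/4}. Then the kernels k((x,x'),(y,y')) := -(1/2) d(x,y)² and k'((x,x'),(y,y')) := -(1/2) ρ(x',y')² on (X×Y)² satisfy ‖k' - k‖_{L²((X×Y)², γ⊗γ)} ≤ C_X · D + (1/2) D²; consequently the Hilbert–Schmidt norms of the induced integral operators K, K' on L²(X×Y, γ), as well as of T := P K P and T' := P K' P where P := Id − 𝟏⊗𝟏 is the orthogonal projector onto the complement of constants, satisfy ‖T' - T‖_{HS} ≤ ‖K' - K‖_{HS} ≤ C_X · D + (1/2) D². -/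

import Mathlib

/-!
Write `a` and `b` for the distances of `X` and `Y` pulled back to `(X × Y)²`. The fourth-moment
hypotheses put both in `L⁴(γ ⊗ γ)` (`memLp_dist_four`), and the difference of the two kernels is
`(a² - b²) / 2 = a (a - b) - (a - b)² / 2`. Hölder's and Minkowski's inequalities
(`eLpNorm_half_sq_sub_sq_le`) bound its `L²` norm by `‖a‖₄ ‖a - b‖₄ + ‖a - b‖₄² / 2`; the marginal
condition identifies `‖a‖₄` with `C_X`.

Centering is linear and is an `L²` contraction (`integral_centeredKernel_sq_le`): it subtracts the
column means and then the row means of what remains, and a variance is at most a second moment.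
-/


open MeasureTheory Metric Filter Topology

noncomputable section

/-- Centering of a kernel `h` with respect to a measure `γ`:
`h_c(z,w) = h(z,w) - ∫ h(z,w') dγ(w') - ∫ h(z',w) dγ(z') + ∫∫ h dγ dγ`.
This is the kernel of `P H P` where `P = Id - 𝟏 ⊗ 𝟏`. -/
def centeredKernel {Z : Type*} [MeasurableSpace Z] (γ : Measure Z) (h : Z → Z → ℝ)
    (z w : Z) : ℝ :=
  h z w - (∫ w', h z w' ∂γ) - (∫ z', h z' w ∂γ) + ∫ z', ∫ w', h z' w' ∂γ ∂γ

/-- The kernel `-(1/2) d(x,y)²` on `(X × Y)²` seen through the first coordinates. -/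
def kFst {X Y : Type*} [MetricSpace X] (p q : X × Y) : ℝ := -(1/2) * dist p.1 q.1 ^ 2

/-- The kernel `-(1/2) ρ(x',y')²` on `(X × Y)²` seen through the second coordinates. -/
def kSnd {X Y : Type*} [MetricSpace Y] (p q : X × Y) : ℝ := -(1/2) * dist p.2 q.2 ^ 2

/-- Centering a kernel does not increase its `L²` norm: it subtracts the mean first in one variable
and then in the other, and each time a variance is bounded by a second moment. -/
lemma integral_centeredKernel_sq_le {Z : Type*} [MeasurableSpace Z] (γ : Measure Z)
    [IsProbabilityMeasure γ] (g : Z → Z → ℝ) (hm : Measurable (Function.uncurry g))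
    (h2 : MemLp (Function.uncurry g) 2 (γ.prod γ)) :
    ∫ z, ∫ w, (centeredKernel γ g z w) ^ 2 ∂γ ∂γ ≤ ∫ z, ∫ w, (g z w) ^ 2 ∂γ ∂γ := by
  have hvar : ∀ f : Z → ℝ, Measurable f → ∫ w, (f w - ∫ w', f w' ∂γ) ^ 2 ∂γ ≤ ∫ w, f w ^ 2 ∂γ := by
    intro f hf
    rw [← ProbabilityTheory.variance_eq_integral hf.aemeasurable]
    exact ProbabilityTheory.variance_le_expectation_sq hf.aestronglyMeasurable
  set c : Z → ℝ := fun w => ∫ z', g z' w ∂γ with hc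
  have hcm : Measurable c := by
    have : StronglyMeasurable (Function.uncurry fun w z => g z w) :=
      (hm.comp measurable_swap).stronglyMeasurable
    exact this.integral_prod_right.measurable
  have hg1 : Integrable (Function.uncurry g) (γ.prod γ) := h2.integrable (by norm_num)
  have hgsq : Integrable (fun p : Z × Z => g p.1 p.2 ^ 2) (γ.prod γ) := h2.integrable_sq
  have hcint : Integrable c γ := hg1.integral_prod_right
  have hmean : ∫ w, c w ∂γ = ∫ z', ∫ w', g z' w' ∂γ ∂γ := (integral_integral_swap hg1).symm
  have hcol : ∀ᵐ w ∂γ, Integrable (fun z => g z w ^ 2) γ := hgsq.prod_left_ae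
  -- Jensen's inequality for the column means puts them in `L²`
  have hcsq : Integrable (fun w => c w ^ 2) γ := by
    refine Integrable.mono' hgsq.integral_prod_right (hcm.pow_const 2).aestronglyMeasurable ?_
    filter_upwards [hcol] with w hw
    have hmw : Measurable fun z => g z w := hm.comp (measurable_id.prodMk measurable_const)
    have h2w : MemLp (fun z => g z w) 2 γ :=
      (memLp_two_iff_integrable_sq hmw.aestronglyMeasurable).2 hw
    have h := ProbabilityTheory.variance_eq_sub h2w
    have h0 := ProbabilityTheory.variance_nonneg (fun z => g z w) γ
    rw [Real.norm_eq_abs, abs_of_nonneg (sq_nonneg _)]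
    simp only [Pi.pow_apply] at h
    linarith
  have hcL2 : MemLp c 2 γ := (memLp_two_iff_integrable_sq hcm.aestronglyMeasurable).2 hcsq
  have hdiff : Integrable (fun p : Z × Z => (g p.1 p.2 - c p.2) ^ 2) (γ.prod γ) :=
    (h2.sub (hcL2.comp_snd γ)).integrable_sq
  calc ∫ z, ∫ w, (centeredKernel γ g z w) ^ 2 ∂γ ∂γ
      ≤ ∫ z, ∫ w, (g z w - c w) ^ 2 ∂γ ∂γ := by
        refine integral_mono_of_nonneg (ae_of_all _ fun z => integral_nonneg fun w => sq_nonneg _)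
          hdiff.integral_prod_left ?_
        filter_upwards [hg1.prod_right_ae] with z hz
        have hmz : Measurable fun w => g z w := hm.comp (measurable_const.prodMk measurable_id)
        have h := hvar (fun w => g z w - c w) (hmz.sub hcm)
        have hsub : ∫ w, (g z w - c w) ∂γ = ∫ w, g z w ∂γ - ∫ w, c w ∂γ := integral_sub hz hcint
        rw [hsub, hmean] at h
        refine le_trans (le_of_eq ?_) h
        refine integral_congr_ae (ae_of_all _ fun w => ?_)
        simp only [centeredKernel, hc]
        ring
    _ = ∫ w, ∫ z, (g z w - c w) ^ 2 ∂γ ∂γ := integral_integral_swap hdiff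
    _ ≤ ∫ w, ∫ z, (g z w) ^ 2 ∂γ ∂γ := by
        refine integral_mono_of_nonneg (ae_of_all _ fun z => integral_nonneg fun w => sq_nonneg _)
          hgsq.integral_prod_right (ae_of_all _ fun w => ?_)
        exact hvar (fun z => g z w) (hm.comp (measurable_id.prodMk measurable_const))
    _ = ∫ z, ∫ w, (g z w) ^ 2 ∂γ ∂γ := (integral_integral_swap hgsq).symm

/-- A finite fourth moment about one point bounds the pairwise distance in `L⁴`, by the triangle
inequality; `f` is the coordinate through which the distance is seen. -/
lemma memLp_dist_four {Z W : Type*} [MeasurableSpace Z] [MetricSpace W] [SecondCountableTopology W]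
    [MeasurableSpace W] [BorelSpace W] (γ : Measure Z) [IsProbabilityMeasure γ] {f : Z → W}
    (hf : Measurable f) {z : W} (h : Integrable (fun p => dist z (f p) ^ 4) γ) :
    MemLp (fun p : Z × Z => dist (f p.1) (f p.2)) 4 (γ.prod γ) := by
  have hm : Measurable fun p => dist z (f p) := measurable_const.dist hf
  have hL : MemLp (fun p => dist z (f p)) 4 γ := by
    refine (integrable_norm_rpow_iff hm.aestronglyMeasurable (by norm_num) (by norm_num)).1 ?_
    simpa [abs_of_nonneg dist_nonneg] using h
  refine ((hL.comp_fst γ).add (hL.comp_snd γ)).mono'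
    ((hf.comp measurable_fst).dist (hf.comp measurable_snd)).aestronglyMeasurable
    (ae_of_all _ fun p => ?_)
  rw [Real.norm_eq_abs, abs_of_nonneg dist_nonneg]
  exact dist_triangle_left _ _ _

/-- A finite fourth moment about one point `z` makes the squared distance to any point integrable, so
that the sections of both kernels are integrable everywhere and not just almost everywhere. -/
lemma integrable_dist_sq {Z W : Type*} [MeasurableSpace Z] [MetricSpace W]
    [SecondCountableTopology W]
    [MeasurableSpace W] [BorelSpace W] (γ : Measure Z) [IsProbabilityMeasure γ] {f : Z → W}
    (hf : Measurable f) {z : W} (h : Integrable (fun p => dist z (f p) ^ 4) γ) (x : W) :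
    Integrable (fun p => dist x (f p) ^ 2) γ := by
  have hm : Measurable fun p => dist x (f p) := measurable_const.dist hf
  refine (((h.const_mul 2).add (integrable_const (1 + 2 * dist x z ^ 2)))).mono'
    (hm.pow_const 2).aestronglyMeasurable (ae_of_all _ fun p => ?_)
  have ht := dist_triangle x z (f p)
  have h0 : 0 ≤ dist x (f p) := dist_nonneg
  rw [Real.norm_eq_abs, abs_of_nonneg (sq_nonneg _)]
  simp only [Pi.add_apply]
  -- `(a + b)² ≤ 2a² + 2b²` and `2b² ≤ 1 + 2b⁴`
  have h1 : dist x (f p) ^ 2 ≤ (dist x z + dist z (f p)) ^ 2 := pow_le_pow_left₀ h0 ht 2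
  nlinarith [sq_nonneg (dist x z - dist z (f p)), sq_nonneg (dist z (f p) ^ 2 - 1),
    sq_nonneg (dist z (f p) ^ 2)]

instance holderTriple_four_four_two : ENNReal.HolderTriple 4 4 2 where
  inv_add_inv_eq_inv := by
    have h : (4 : ENNReal) = 2 * 2 := by norm_num
    rw [h, ENNReal.mul_inv (by simp) (by simp), ← mul_add, ENNReal.inv_two_add_inv_two, mul_one]

lemma toReal_eLpNorm_four {Ω : Type*} [MeasurableSpace Ω] {π : Measure Ω} {f : Ω → ℝ}
    (hf : MemLp f 4 π) : (eLpNorm f 4 π).toReal = (∫ p, |f p| ^ 4 ∂π) ^ ((1:ℝ)/4) := by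
  rw [hf.eLpNorm_eq_integral_rpow_norm (by norm_num) (by norm_num), ENNReal.toReal_ofReal]
  · simp
  · positivity

lemma toReal_eLpNorm_two {Ω : Type*} [MeasurableSpace Ω] {π : Measure Ω} {f : Ω → ℝ}
    (hf : MemLp f 2 π) : (eLpNorm f 2 π).toReal = (∫ p, f p ^ 2 ∂π) ^ ((1:ℝ)/2) := by
  rw [hf.eLpNorm_eq_integral_rpow_norm (by norm_num) (by norm_num), ENNReal.toReal_ofReal]
  · simp
  · positivity

/-- Hölder's inequality with exponents `4, 4` and Minkowski's inequality, applied to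
`(a² - b²) / 2 = a (a - b) - (a - b)² / 2`. -/
lemma eLpNorm_half_sq_sub_sq_le {Ω : Type*} [MeasurableSpace Ω] {π : Measure Ω} {a b : Ω → ℝ}
    (ha : MemLp a 4 π) (hb : MemLp b 4 π) :
    MemLp (fun p => (a p ^ 2 - b p ^ 2) / 2) 2 π ∧
    (eLpNorm (fun p => (a p ^ 2 - b p ^ 2) / 2) 2 π).toReal ≤
      (eLpNorm a 4 π).toReal * (eLpNorm (a - b) 4 π).toReal
        + (1/2) * (eLpNorm (a - b) 4 π).toReal ^ 2 := by
  have he : MemLp (a - b) 4 π := ha.sub hb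
  have hL1 : MemLp (a • (a - b)) 2 π := he.smul ha
  have hL2 : MemLp ((a - b) • (a - b)) 2 π := he.smul he
  have hL3 : MemLp ((1/2 : ℝ) • ((a - b) • (a - b))) 2 π := hL2.const_smul _
  have heq : (fun p => (a p ^ 2 - b p ^ 2) / 2)
      = a • (a - b) - (1/2 : ℝ) • ((a - b) • (a - b)) := by
    ext p
    simp only [Pi.sub_apply, Pi.smul_apply, Pi.mul_apply, smul_eq_mul]
    ring
  rw [heq]
  refine ⟨hL1.sub hL3, ?_⟩
  have hA := eLpNorm_smul_le_mul_eLpNorm (p := 4) (q := 4) (r := 2) he.1 ha.1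
  have hB := eLpNorm_smul_le_mul_eLpNorm (p := 4) (q := 4) (r := 2) he.1 he.1
  have hA' := ENNReal.toReal_mono (ENNReal.mul_ne_top ha.2.ne he.2.ne) hA
  have hB' := ENNReal.toReal_mono (ENNReal.mul_ne_top he.2.ne he.2.ne) hB
  rw [ENNReal.toReal_mul] at hA' hB'
  have hS := ENNReal.toReal_mono (ENNReal.add_ne_top.2 ⟨hL1.2.ne, hL3.2.ne⟩)
    (eLpNorm_sub_le hL1.1 hL3.1 (by norm_num))
  rw [ENNReal.toReal_add hL1.2.ne hL3.2.ne, eLpNorm_const_smul, ENNReal.toReal_mul] at hS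
  have h12 : (‖(1/2 : ℝ)‖ₑ).toReal = 1/2 := by simp
  rw [h12] at hS
  nlinarith

/-- Lemma 5.1: for a coupling `γ` of `μ` and `ν`, with
`C_X = (∫∫ d⁴ dμ dμ)^{1/4}` and `D = (∫∫ |d - ρ|⁴ dγ dγ)^{1/4}` (the `GW₄`-cost of `γ`),
the kernels `k = -(1/2)d²` and `k' = -(1/2)ρ²` on `(X×Y)²` satisfy
`‖k' - k‖_{L²(γ⊗γ)} ≤ C_X D + D²/2`; since the Hilbert–Schmidt norm of an integral operator
equals the `L²` norm of its kernel, the induced operators satisfy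
`‖T' - T‖_{HS} ≤ ‖K' - K‖_{HS} ≤ C_X D + D²/2`, the centered kernels being those of
`T = PKP`, `T' = PK'P`. -/
theorem hs_bound_of_coupling
    {X Y : Type*} [MetricSpace X] [CompleteSpace X] [SecondCountableTopology X]
    [MeasurableSpace X] [BorelSpace X]
    [MetricSpace Y] [CompleteSpace Y] [SecondCountableTopology Y]
    [MeasurableSpace Y] [BorelSpace Y]
    (μ : Measure X) [IsProbabilityMeasure μ] (ν : Measure Y) [IsProbabilityMeasure ν]
    (hmomX : ∃ z : X, Integrable (fun y => dist z y ^ 4) μ)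
    (hmomY : ∃ z : Y, Integrable (fun y => dist z y ^ 4) ν)
    (γ : Measure (X × Y)) [IsProbabilityMeasure γ]
    (hfst : γ.map Prod.fst = μ) (hsnd : γ.map Prod.snd = ν)
    (CX D : ℝ)
    (hCX : CX = (∫ x, ∫ y, dist x y ^ 4 ∂μ ∂μ) ^ ((1:ℝ)/4))
    (hD : D = (∫ p, ∫ q, |dist p.1 q.1 - dist p.2 q.2| ^ 4 ∂γ ∂γ) ^ ((1:ℝ)/4)) :
    (∫ p, ∫ q, (centeredKernel γ kSnd p q - centeredKernel γ kFst p q) ^ 2 ∂γ ∂γ) ^ ((1:ℝ)/2)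
        ≤ (∫ p, ∫ q, (kSnd p q - kFst p q) ^ 2 ∂γ ∂γ) ^ ((1:ℝ)/2) ∧
    (∫ p, ∫ q, (kSnd p q - kFst p q) ^ 2 ∂γ ∂γ) ^ ((1:ℝ)/2) ≤ CX * D + (1/2) * D ^ 2 := by
  subst hfst hsnd
  obtain ⟨x₀, hx₀⟩ := hmomX
  obtain ⟨y₀, hy₀⟩ := hmomY
  have hx : Integrable (fun p : X × Y => dist x₀ p.1 ^ 4) γ :=
    hx₀.comp_measurable measurable_fst
  have hy : Integrable (fun p : X × Y => dist y₀ p.2 ^ 4) γ :=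
    hy₀.comp_measurable measurable_snd
  set a : (X × Y) × (X × Y) → ℝ := fun p => dist p.1.1 p.2.1 with ha
  set b : (X × Y) × (X × Y) → ℝ := fun p => dist p.1.2 p.2.2 with hb
  have haL : MemLp a 4 (γ.prod γ) := memLp_dist_four γ measurable_fst hx
  have hbL : MemLp b 4 (γ.prod γ) := memLp_dist_four γ measurable_snd hy
  obtain ⟨hL2, hle⟩ := eLpNorm_half_sq_sub_sq_le haL hbL
  set g : X × Y → X × Y → ℝ := fun p q => kSnd p q - kFst p q with hg
  have hgu : Function.uncurry g = fun p => (a p ^ 2 - b p ^ 2) / 2 := by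
    ext ⟨p, q⟩
    simp only [hg, ha, hb, Function.uncurry_apply_pair, kSnd, kFst]
    ring
  have ham : Measurable a :=
    (measurable_fst.comp measurable_fst).dist (measurable_fst.comp measurable_snd)
  have hbm : Measurable b :=
    (measurable_snd.comp measurable_fst).dist (measurable_snd.comp measurable_snd)
  have hgm : Measurable (Function.uncurry g) := by
    rw [hgu]
    exact ((ham.pow_const 2).sub (hbm.pow_const 2)).div_const 2
  rw [← hgu] at hL2 hle
  constructor
  · -- centering is linear, because every section of both kernels is integrable
    have hF : ∀ p : X × Y, Integrable (fun q => kFst p q) γ := fun p =>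
      (integrable_dist_sq γ measurable_fst hx p.1).const_mul _
    have hS : ∀ p : X × Y, Integrable (fun q => kSnd p q) γ := fun p =>
      (integrable_dist_sq γ measurable_snd hy p.2).const_mul _
    have hFsymm : ∀ p q : X × Y, kFst p q = kFst q p := fun p q => by simp [kFst, dist_comm]
    have hSsymm : ∀ p q : X × Y, kSnd p q = kSnd q p := fun p q => by simp [kSnd, dist_comm]
    have hFL : Integrable (fun p : (X × Y) × (X × Y) => kFst p.1 p.2) (γ.prod γ) :=
      ((haL.mono_exponent (p := 2) (by norm_num)).integrable_sq).const_mul _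
    have hSL : Integrable (fun p : (X × Y) × (X × Y) => kSnd p.1 p.2) (γ.prod γ) :=
      ((hbL.mono_exponent (p := 2) (by norm_num)).integrable_sq).const_mul _
    have hlin : ∀ p q, centeredKernel γ kSnd p q - centeredKernel γ kFst p q
        = centeredKernel γ g p q := by
      intro p q
      have h1 : ∀ p, ∫ w, g p w ∂γ = ∫ w, kSnd p w ∂γ - ∫ w, kFst p w ∂γ := fun p =>
        integral_sub (hS p) (hF p)
      have h2 : ∫ z, g z q ∂γ = ∫ z, kSnd z q ∂γ - ∫ z, kFst z q ∂γ := by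
        simp only [hg, hFsymm _ q, hSsymm _ q]
        exact integral_sub (hS q) (hF q)
      have h3 : ∫ z, ∫ w, g z w ∂γ ∂γ
          = ∫ z, ∫ w, kSnd z w ∂γ ∂γ - ∫ z, ∫ w, kFst z w ∂γ ∂γ := by
        simp only [h1]
        exact integral_sub hSL.integral_prod_left hFL.integral_prod_left
      simp only [centeredKernel, h1 p, h2, h3]
      simp only [hg]
      ring
    simp only [hlin]
    exact Real.rpow_le_rpow (integral_nonneg fun p => integral_nonneg fun q => sq_nonneg _)
      (integral_centeredKernel_sq_le γ g hgm hL2) (by norm_num)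
  · have hCX' : CX = (eLpNorm a 4 (γ.prod γ)).toReal := by
      have hmeas : Measurable (fun p : X × X => dist p.1 p.2 ^ 4) :=
        (measurable_fst.dist measurable_snd).pow_const 4
      rw [toReal_eLpNorm_four haL, hCX, integral_prod _ (by
        simpa using haL.integrable_norm_rpow (by norm_num) (by norm_num)),
        integral_map measurable_fst.aemeasurable
          hmeas.stronglyMeasurable.integral_prod_right'.aestronglyMeasurable]
      congr 1
      refine integral_congr_ae (ae_of_all _ fun p => ?_)
      simp only
      rw [integral_map measurable_fst.aemeasurable
        (f := fun y => dist p.1 y ^ 4)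
        ((measurable_const.dist measurable_id).pow_const 4).aestronglyMeasurable]
      simp [ha, abs_of_nonneg dist_nonneg]
    have hD' : D = (eLpNorm (a - b) 4 (γ.prod γ)).toReal := by
      rw [toReal_eLpNorm_four (haL.sub hbL), hD, integral_prod _ (by
        simpa using (haL.sub hbL).integrable_norm_rpow (by norm_num) (by norm_num))]
      rfl
    rw [hCX', hD']
    refine le_trans (le_of_eq ?_) hle
    rw [toReal_eLpNorm_two hL2, integral_prod _ hL2.integrable_sq]
    rfl
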